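/- Let Λ = KQ/⟨all paths of length L+1⟩ be a truncated path algebra over an algebraically closed field and let S be a realizable semisimple sequence of dimension vector d. Then the Zariski closure of Rep S in Rep_d(Λ) equals Filt S, the set of all points x ∈ Rep_d(Λ) such that M_x possesses a submodule filtration governed by S. -/

import Mathlib

open Finset

/-! # Varieties of representations of a quiver with relations: basic setup -/

/-- The Zariski topology on the affine space `ι → K`: it is generated by the basic open
sets `D(p) = {x | p(x) ≠ 0}`, where `p` ranges over multivariate polynomials. -/
def zariskiTopology (ι K : Type) [CommSemiring K] : TopologicalSpace (ι → K) :=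
  TopologicalSpace.generateFrom
    {U | ∃ p : MvPolynomial ι K, U = {x | MvPolynomial.eval x p ≠ 0}}

/-- A finite quiver `Q`: vertices `Fin n`, arrows `Fin numArrows` with source and
target maps. -/
structure QuiverData where
  n : ℕ
  numArrows : ℕ
  src : Fin numArrows → Fin n
  tgt : Fin numArrows → Fin n

namespace QuiverData

variable (Q : QuiverData) (d : Fin Q.n → ℕ) (K : Type) [Field K]

/-- Index of the coordinates of the affine space of `d`-dimensional representations:
for each arrow `a` a matrix entry index in `Fin (d (tgt a)) × Fin (d (src a))`. -/
abbrev Coords := Σ a : Fin Q.numArrows, Fin (d (Q.tgt a)) × Fin (d (Q.src a))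

/-- The affine space of `d`-dimensional representations of `Q`:
a point `x` assigns to each arrow `a` a `d (tgt a) × d (src a)` matrix over `K`. -/
abbrev RepSpace := Coords Q d → K

/-- `RepSpace` carries the Zariski topology. -/
noncomputable instance instRepTop : TopologicalSpace (RepSpace Q d K) :=
  zariskiTopology (Coords Q d) K

/-- The underlying `K`-vector space `⊕ᵢ K^{dᵢ}` of any `d`-dimensional representation. -/
abbrev Carrier := (Σ i : Fin Q.n, Fin (d i)) → K

/-- The projection onto the component of the `i`-th vertex (action of the primitive
idempotent `eᵢ`). -/
def proj (i : Fin Q.n) : Carrier Q d K →ₗ[K] Carrier Q d K where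
  toFun m := fun jv => if jv.1 = i then m jv else 0
  map_add' u v := by
    funext jv; by_cases h : jv.1 = i <;> simp [h]
  map_smul' c u := by
    funext jv; by_cases h : jv.1 = i <;> simp [h]

/-- The action of the arrow `a` on the carrier space of the representation `x`. -/
noncomputable def arrowMap (x : RepSpace Q d K) (a : Fin Q.numArrows) :
    Carrier Q d K →ₗ[K] Carrier Q d K where
  toFun m := fun jv =>
    if h : jv.1 = Q.tgt a then
      ∑ w : Fin (d (Q.src a)), x ⟨a, (Fin.cast (congrArg d h) jv.2, w)⟩ * m ⟨Q.src a, w⟩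
    else 0
  map_add' u v := by
    funext jv
    by_cases h : jv.1 = Q.tgt a <;> simp [h, mul_add, Finset.sum_add_distrib]
  map_smul' c u := by
    funext jv
    by_cases h : jv.1 = Q.tgt a <;>
      simp [h, Finset.mul_sum, mul_comm, mul_left_comm, mul_assoc]

/-- The action of a word `w = [a_k, …, a_1]` of arrows on the representation `x`
(the arrow `a_1` acts first; non-composable words act as `0`). -/
noncomputable def wordMap (x : RepSpace Q d K) (w : List (Fin Q.numArrows)) :
    Module.End K (Carrier Q d K) :=
  (w.map fun a => (arrowMap Q d K x a : Module.End K (Carrier Q d K))).prod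

/-- The submodule `J^l · M_x` of the module `M_x`: the sum of the images of all words of
arrows of length `l` (for an admissible ideal, the radical acts through the arrows). -/
noncomputable def radPow (x : RepSpace Q d K) (l : ℕ) : Submodule K (Carrier Q d K) :=
  ⨆ w : {w : List (Fin Q.numArrows) // w.length = l},
    LinearMap.range (wordMap Q d K x w.1)

/-- The socle series of `M_x`: `socPow x l = soc_l(M_x)`. -/
noncomputable def socPow (x : RepSpace Q d K) : ℕ → Submodule K (Carrier Q d K)
  | 0 => ⨅ a, LinearMap.ker (arrowMap Q d K x a)
  | (l+1) => ⨅ a, (socPow x l).comap (arrowMap Q d K x a)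

/-- The dimension, at the vertex `i`, of a (vertex-graded) subspace `N`. -/
noncomputable def vdim (N : Submodule K (Carrier Q d K)) (i : Fin Q.n) : ℕ :=
  Module.finrank K (N.map (proj Q d K i))

/-- The radical layering `S(M_x) = (M/JM, JM/J²M, …, J^L M/J^{L+1} M)` of the module `M_x`,
recorded through the dimension vectors of its semisimple layers. -/
noncomputable def radLayering (L : ℕ) (x : RepSpace Q d K) :
    Fin (L+1) → Fin Q.n → ℕ :=
  fun l i => vdim Q d K (radPow Q d K x l) i - vdim Q d K (radPow Q d K x (l+1)) i

/-- The socle layering `S*(M_x) = (soc₀M, soc₁M/soc₀M, …)` of the module `M_x`, recorded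
through the dimension vectors of its semisimple layers. -/
noncomputable def socLayering (L : ℕ) (x : RepSpace Q d K) :
    Fin (L+1) → Fin Q.n → ℕ :=
  fun l i => vdim Q d K (socPow Q d K x l) i -
    (if (l : ℕ) = 0 then 0 else vdim Q d K (socPow Q d K x ((l : ℕ) - 1)) i)

end QuiverData

/-- The dominance order on semisimple sequences (recorded as sequences of dimension
vectors): `dominates S S'` means `S ≤ S'`, i.e. `⊕_{j≤l} S_j ⊆ ⊕_{j≤l} S'_j` for all `l`. -/
def dominates {n L : ℕ} (S S' : Fin (L+1) → Fin n → ℕ) : Prop :=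
  ∀ (l : Fin (L+1)) (i : Fin n),
    ∑ j ∈ Finset.univ.filter (fun j => j ≤ l), S j i ≤
      ∑ j ∈ Finset.univ.filter (fun j => j ≤ l), S' j i

/-- A semisimple sequence has dimension vector `d` if its layers' dimension vectors sum
to `d`. -/
def hasDimVec {n L : ℕ} (S : Fin (L+1) → Fin n → ℕ) (d : Fin n → ℕ) : Prop :=
  ∀ i, ∑ l, S l i = d i

namespace QuiverData

variable (Q : QuiverData) (d : Fin Q.n → ℕ) (K : Type) [Field K]

/-- Evaluation of a formal noncommutative polynomial in the vertices (`Sum.inl`) and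
arrows (`Sum.inr`) of `Q` on the representation `x`; an element of the path algebra `KQ`
is represented by such a polynomial. -/
noncomputable def evalRel (x : RepSpace Q d K) :
    FreeAlgebra K (Fin Q.n ⊕ Fin Q.numArrows) →ₐ[K] Module.End K (Carrier Q d K) :=
  FreeAlgebra.lift K
    (Sum.elim (fun i => (proj Q d K i : Module.End K (Carrier Q d K)))
      (fun a => (arrowMap Q d K x a : Module.End K (Carrier Q d K))))

/-- The affine variety `Rep_d(Λ)` for `Λ = KQ/I`, where the ideal `I` is generated by the
set `R` of relations: the set of points of `RepSpace` annihilating every relation. -/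
def RepVar (R : Set (FreeAlgebra K (Fin Q.n ⊕ Fin Q.numArrows))) :
    Set (RepSpace Q d K) :=
  {x | ∀ r ∈ R, evalRel Q d K x r = 0}

/-- The affine variety `Rep_d(Λ)` for the truncated path algebra
`Λ = KQ/⟨all paths of length L+1⟩`. -/
def TruncRepVar (L : ℕ) : Set (RepSpace Q d K) :=
  {x | ∀ w : List (Fin Q.numArrows), w.length = L + 1 → wordMap Q d K x w = 0}

/-- A submodule of `M_x`, i.e. a subspace stable under the arrows and the vertex
idempotents. -/
def Stable (x : RepSpace Q d K) (N : Submodule K (Carrier Q d K)) : Prop :=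
  (∀ a, N.map (arrowMap Q d K x a) ≤ N) ∧ ∀ i, N.map (proj Q d K i) ≤ N

/-- A submodule `N` of `M_x` is indecomposable (as a module). -/
def IndecompSub (x : RepSpace Q d K) (N : Submodule K (Carrier Q d K)) : Prop :=
  N ≠ ⊥ ∧ ∀ N₁ N₂ : Submodule K (Carrier Q d K),
    Stable Q d K x N₁ → Stable Q d K x N₂ → N₁ ≤ N → N₂ ≤ N →
    N₁ ⊔ N₂ = N → N₁ ⊓ N₂ = ⊥ → N₁ = ⊥ ∨ N₂ = ⊥

/-- The module `M_x` is indecomposable. -/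
def IndecompRep (x : RepSpace Q d K) : Prop :=
  IndecompSub Q d K x ⊤

/-- The module `M_x` is uniserial: its submodules form a chain. -/
def UniserialRep (x : RepSpace Q d K) : Prop :=
  ∀ N₁ N₂ : Submodule K (Carrier Q d K),
    Stable Q d K x N₁ → Stable Q d K x N₂ → N₁ ≤ N₂ ∨ N₂ ≤ N₁

/-- `M_x` decomposes as a direct sum of `s` indecomposable submodules whose dimension
vectors are `D 0, …, D (s-1)`. -/
def DecompWith (x : RepSpace Q d K) (s : ℕ) (D : Fin s → Fin Q.n → ℕ) : Prop :=
  ∃ N : Fin s → Submodule K (Carrier Q d K),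
    (∀ r, Stable Q d K x (N r)) ∧
    (∀ r, Disjoint (N r) (⨆ t, ⨆ (_ : t ≠ r), N t)) ∧
    (⨆ r, N r) = ⊤ ∧
    (∀ r, IndecompSub Q d K x (N r)) ∧
    ∀ r i, vdim Q d K (N r) i = D r i

/-- A homomorphism of representations `M_x → M_y` (for possibly different dimension
vectors): a linear map commuting with the arrow actions and the vertex projections. -/
def RepHom (dx dy : Fin Q.n → ℕ) (x : RepSpace Q dx K) (y : RepSpace Q dy K)
    (φ : Carrier Q dx K →ₗ[K] Carrier Q dy K) : Prop :=
  (∀ a, φ ∘ₗ arrowMap Q dx K x a = arrowMap Q dy K y a ∘ₗ φ) ∧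
  ∀ i, φ ∘ₗ proj Q dx K i = proj Q dy K i ∘ₗ φ

/-- The submodule `N` of `M_x` is isomorphic, as a representation, to `M_y`. -/
def SubrepIso (dy : Fin Q.n → ℕ) (x : RepSpace Q d K)
    (N : Submodule K (Carrier Q d K)) (y : RepSpace Q dy K) : Prop :=
  ∃ φ : Carrier Q d K →ₗ[K] Carrier Q dy K,
    N ⊓ LinearMap.ker φ = ⊥ ∧ N.map φ = ⊤ ∧
    (∀ a, ∀ m ∈ N, φ (arrowMap Q d K x a m) = arrowMap Q dy K y a (φ m)) ∧
    (∀ i, ∀ m ∈ N, φ (proj Q d K i m) = proj Q dy K i (φ m))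

/-- The representations `M_x` and `M_y` are isomorphic; the isomorphism classes are
exactly the orbits of the `GL(d)`-action. -/
def IsoRep (x y : RepSpace Q d K) : Prop :=
  ∃ φ : Carrier Q d K ≃ₗ[K] Carrier Q d K,
    (∀ a m, φ (arrowMap Q d K x a m) = arrowMap Q d K y a (φ m)) ∧
    ∀ i m, φ (proj Q d K i m) = proj Q d K i (φ m)

/-- The `GL(d)`-orbit of the point `x`, i.e. the set of points encoding modules
isomorphic to `M_x`. -/
def orbitSet (x : RepSpace Q d K) : Set (RepSpace Q d K) :=
  {y | IsoRep Q d K x y}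

/-- Given a family `P` of varieties `Rep_dv(Λ)` (one for every dimension vector `dv`),
`Ext¹_Λ(M_x, M_y) = 0`: every extension `0 → M_y → E → M_x → 0` of `Λ`-modules splits. -/
def Ext1Zero (P : ∀ dv : Fin Q.n → ℕ, Set (RepSpace Q dv K))
    (dx dy : Fin Q.n → ℕ) (x : RepSpace Q dx K) (y : RepSpace Q dy K) : Prop :=
  ∀ z ∈ P (fun i => dx i + dy i),
    ∀ (ι : Carrier Q dy K →ₗ[K] Carrier Q (fun i => dx i + dy i) K)
      (π : Carrier Q (fun i => dx i + dy i) K →ₗ[K] Carrier Q dx K),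
      RepHom Q K dy (fun i => dx i + dy i) y z ι →
      RepHom Q K (fun i => dx i + dy i) dx z x π →
      Function.Injective ι → Function.Surjective π →
      LinearMap.ker π = LinearMap.range ι →
      ∃ σ : Carrier Q dx K →ₗ[K] Carrier Q (fun i => dx i + dy i) K,
        RepHom Q K dx (fun i => dx i + dy i) x z σ ∧ π ∘ₗ σ = LinearMap.id

/-- The direct sum `C₁ ⊕ ⋯ ⊕ C_s` of subvarieties `C_r ⊆ Rep_{D r}(Λ)`: the set of
points `x ∈ Rep_d(Λ)` whose module decomposes as `M_x ≅ ⊕_r M^{(r)}` with `M^{(r)}`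
encoded by a point of `C_r`. -/
def DirectSumSet (s : ℕ) (D : Fin s → Fin Q.n → ℕ)
    (Cs : ∀ r : Fin s, Set (RepSpace Q (D r) K)) : Set (RepSpace Q d K) :=
  {x | ∃ N : Fin s → Submodule K (Carrier Q d K),
    (∀ r, Stable Q d K x (N r)) ∧
    (∀ r, Disjoint (N r) (⨆ t, ⨆ (_ : t ≠ r), N t)) ∧
    (⨆ r, N r) = ⊤ ∧
    ∀ r, ∃ y ∈ Cs r, SubrepIso Q d K (D r) x (N r) y}

/-- The endomorphism space `End_Λ(M_x)` of the module `M_x`. -/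
def endSpace (x : RepSpace Q d K) :
    Submodule K (Carrier Q d K →ₗ[K] Carrier Q d K) where
  carrier := {φ | RepHom Q K d d x x φ}
  add_mem' := by
    intro φ ψ hφ hψ
    exact ⟨fun a => by rw [LinearMap.add_comp, LinearMap.comp_add, hφ.1 a, hψ.1 a],
      fun i => by rw [LinearMap.add_comp, LinearMap.comp_add, hφ.2 i, hψ.2 i]⟩
  zero_mem' := by
    exact ⟨fun a => by simp, fun i => by simp⟩
  smul_mem' := by
    intro c φ hφ
    exact ⟨fun a => by rw [LinearMap.smul_comp, LinearMap.comp_smul, hφ.1 a],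
      fun i => by rw [LinearMap.smul_comp, LinearMap.comp_smul, hφ.2 i]⟩

/-- A word of arrows is a (composable) path when read in function-composition order. -/
def IsPathWord (w : List (Fin Q.numArrows)) : Prop :=
  List.Chain' (fun a b => Q.src a = Q.tgt b) w

/-- The quiver `Q` has no oriented cycles. -/
def Acyclic : Prop :=
  ∀ (a : Fin Q.numArrows) (w : List (Fin Q.numArrows)),
    IsPathWord Q (a :: w) →
      Q.tgt a ≠ Q.src ((a :: w).getLast (List.cons_ne_nil a w))

/-- A filtration `M_x = F 0 ⊇ F 1 ⊇ ⋯ ⊇ F (L+1) = 0` by submodules which is governed by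
the semisimple sequence `S`: each layer `F l / F (l+1)` is semisimple, isomorphic to `S l`. -/
def Governed (L : ℕ) (x : RepSpace Q d K) (S : Fin (L+1) → Fin Q.n → ℕ)
    (F : Fin (L+2) → Submodule K (Carrier Q d K)) : Prop :=
  F 0 = ⊤ ∧ F (Fin.last (L+1)) = ⊥ ∧
  (∀ l : Fin (L+1), F l.succ ≤ F l.castSucc) ∧
  (∀ (l : Fin (L+2)) (i : Fin Q.n), (F l).map (proj Q d K i) ≤ F l) ∧
  (∀ (l : Fin (L+1)) (a : Fin Q.numArrows),
      (F l.castSucc).map (arrowMap Q d K x a) ≤ F l.succ) ∧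
  ∀ (l : Fin (L+1)) (i : Fin Q.n),
      vdim Q d K (F l.castSucc) i = S l i + vdim Q d K (F l.succ) i

/-- `Filt S`: the set of points whose module has a filtration governed by `S`. -/
def FiltSet (L : ℕ) (S : Fin (L+1) → Fin Q.n → ℕ) : Set (RepSpace Q d K) :=
  {x | ∃ F, Governed Q d K L x S F}

/-- `Γ(M_x)`: the number of semisimple sequences which are realizable (i.e. occur as the
radical layering of a module in the variety `P`) and which govern some filtration of `M_x`. -/
noncomputable def gammaCount (L : ℕ) (P : Set (RepSpace Q d K))
    (x : RepSpace Q d K) : ℕ :=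
  Set.ncard {S : Fin (L+1) → Fin Q.n → ℕ |
    (∃ y ∈ P, radLayering Q d K L y = S) ∧ ∃ F, Governed Q d K L x S F}

/-- `Sstar` is the generic (= minimal, attained) socle layering of the modules in `W`. -/
def GenSoc (L : ℕ) (W : Set (RepSpace Q d K))
    (Sstar : Fin (L+1) → Fin Q.n → ℕ) : Prop :=
  (∀ x ∈ W, dominates Sstar (socLayering Q d K L x)) ∧
  ∃ x ∈ W, socLayering Q d K L x = Sstar

end QuiverData

namespace QuiverData

variable (Q : QuiverData)

/-- The `i`-th entry of the row vector `e·A` (over `ℤ`), where `A` is the adjacency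
matrix of `Q`: the sum of `e (src a)` over all arrows `a` ending at `i`. -/
def inflowZ (e : Fin Q.n → ℤ) (i : Fin Q.n) : ℤ :=
  ∑ a ∈ Finset.univ.filter (fun a => Q.tgt a = i), e (Q.src a)

/-- The `i`-th entry of the row vector `e·B` (over `ℤ`), where `B` is the transpose of
the adjacency matrix of `Q`. -/
def outflowZ (e : Fin Q.n → ℤ) (i : Fin Q.n) : ℤ :=
  ∑ a ∈ Finset.univ.filter (fun a => Q.src a = i), e (Q.tgt a)

/-- Partial sums `t⁽⁰⁾ + ⋯ + t⁽ˡ⁾` of the recursion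
`t⁽⁰⁾ = sup{0, d − d·A}`, `t⁽ˡ⁺¹⁾ = sup{0, (d − ∑_{k≤l} t⁽ᵏ⁾) − (d − ∑_{k≤l} t⁽ᵏ⁾)·A}`
(computed componentwise). -/
def cumLayer (dz : Fin Q.n → ℤ) : ℕ → Fin Q.n → ℤ
  | 0 => fun i => max 0 (dz i - inflowZ Q dz i)
  | (l+1) => fun i =>
      cumLayer dz l i +
        max 0 ((dz i - cumLayer dz l i) -
          inflowZ Q (fun j => dz j - cumLayer dz l j) i)

/-- The positive part `∑ᵢ eᵢ fᵢ` of the Euler form of `Q`. -/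
def eulerHomPart (e f : Fin Q.n → ℕ) : ℕ := ∑ i, e i * f i

/-- The negative part `∑_{α} e_{src α} f_{tgt α}` of the Euler form of `Q`, so that
`⟨e, f⟩ = eulerHomPart e f − eulerExtPart e f`. -/
def eulerExtPart (e f : Fin Q.n → ℕ) : ℕ :=
  ∑ a, e (Q.src a) * f (Q.tgt a)

end QuiverData

/-- The quiver with a single vertex and `r` loops. -/
def QuiverData.loopQuiver (r : ℕ) : QuiverData :=
  ⟨1, r, fun _ => 0, fun _ => 0⟩

namespace QuiverData

variable (Q : QuiverData) (d : Fin Q.n → ℕ) (K : Type) [Field K]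

/-- The variety `Rep_d(Λ)` for `Λ = KQ/⟨Rels⟩`, regarded as a topological space with the
(subspace) Zariski topology. -/
abbrev GenV (Rels : Set (FreeAlgebra K (Fin Q.n ⊕ Fin Q.numArrows))) :=
  {y : RepSpace Q d K // y ∈ RepVar Q d K Rels}

/-- The variety `Rep_d(Λ)` for the truncated path algebra
`Λ = KQ/⟨paths of length L+1⟩`, regarded as a topological space. -/
abbrev TruncV (L : ℕ) := {y : RepSpace Q d K // y ∈ TruncRepVar Q d K L}

end QuiverData


/-- K-points from points in a field extension. -/
lemma null_descent {K k σ : Type*} [Field K] [IsAlgClosed K] [Finite σ] [Field k] [Algebra K k]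
    (v : σ → k) : ∃ pt : σ → K, ∀ P : MvPolynomial σ K,
      MvPolynomial.aeval v P = 0 → MvPolynomial.eval pt P = 0 := by
  have hne : RingHom.ker (MvPolynomial.aeval (R := K) v) ≠ ⊤ := RingHom.ker_ne_top _
  obtain ⟨M, hM, hle⟩ := Ideal.exists_le_maximal _ hne
  obtain ⟨pt, rfl⟩ := (MvPolynomial.isMaximal_iff_eq_vanishingIdeal_singleton).1 hM
  refine ⟨pt, fun P hP => ?_⟩
  have := hle (show P ∈ _ from hP)
  rw [MvPolynomial.mem_vanishingIdeal_singleton_iff] at this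
  simpa [MvPolynomial.aeval_eq_eval] using this

lemma pencil_surj {K U W : Type*} [Field K] [AddCommGroup U] [Module K U]
    [AddCommGroup W] [Module K W] [FiniteDimensional K W]
    (A B : U →ₗ[K] W) (h : Function.Surjective (A + B)) :
    ∃ q : Polynomial K, q.eval 1 ≠ 0 ∧
      ∀ t, q.eval t ≠ 0 → Function.Surjective (A + t • B) := by
  obtain ⟨R, hR⟩ := (A + B).exists_rightInverse_of_surjective (LinearMap.range_eq_top.2 h)
  let b := Module.finBasis K W
  let MA := LinearMap.toMatrix b b (A ∘ₗ R)
  let MB := LinearMap.toMatrix b b (B ∘ₗ R)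
  let q : Polynomial K := (MA.map Polynomial.C + (Polynomial.X : Polynomial K) • MB.map Polynomial.C).det
  have key : ∀ t, q.eval t = LinearMap.det ((A + t • B) ∘ₗ R) := by
    intro t
    rw [← LinearMap.det_toMatrix b]
    rw [← Polynomial.coe_evalRingHom, RingHom.map_det]
    congr 1
    ext i j
    simp [MA, MB, LinearMap.add_comp, LinearMap.smul_comp]
    exact mul_comm _ _
  refine ⟨q, ?_, ?_⟩
  · rw [key, one_smul, hR]; simp
  · intro t ht
    rw [key] at ht
    have hu : IsUnit ((A + t • B) ∘ₗ R) := (LinearMap.isUnit_iff_isUnit_det _).2 (isUnit_iff_ne_zero.2 ht)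
    have hb := ((Module.End.isUnit_iff _).1 hu).2
    exact Function.Surjective.of_comp (g := R) hb

lemma adapted_basis {K V ι : Type*} [Field K] [AddCommGroup V] [Module K V]
    [FiniteDimensional K V] [Fintype ι] (N : ℕ → Submodule K V) (hN : Antitone N)
    (lam : ι → ℕ) (m : ℕ) (hlam : ∀ j, lam j < m)
    (hcard : ∀ l, Module.finrank K (N l) = Fintype.card {j // l ≤ lam j}) :
    ∃ b : ι → V, LinearIndependent K b ∧
      ∀ l, Submodule.span K (b '' {j | l ≤ lam j}) = N l := by
  classical
  have main : ∀ r ≤ m, ∃ b : ι → V, LinearIndepOn K b {j | m - r ≤ lam j} ∧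
      ∀ j, m - r ≤ lam j → b j ∈ N (lam j) := by
    intro r
    induction r with
    | zero =>
      intro _
      have he : {j | m - 0 ≤ lam j} = ∅ := by
        ext j; simp [hlam j]
      refine ⟨fun _ => 0, by rw [he]; exact linearIndepOn_empty _ _, fun j hj => ?_⟩
      simp
    | succ r ih =>
      intro hr
      obtain ⟨b, hb1, hb2⟩ := ih (by omega)
      set l := m - (r + 1) with hl
      have hl' : m - r = l + 1 := by omega
      rw [hl'] at hb1 hb2
      obtain ⟨C, hC⟩ := exists_isCompl ((N (l+1)).comap (N l).subtype)
      have hle : N (l+1) ≤ N l := hN (Nat.le_succ l)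
      have hfr : Module.finrank K C = Fintype.card {j // lam j = l} := by
        have h1 := Submodule.finrank_add_eq_of_isCompl hC
        have h2 : Module.finrank K ((N (l+1)).comap (N l).subtype) = Module.finrank K (N (l+1)) :=
          LinearEquiv.finrank_eq (Submodule.comapSubtypeEquivOfLe hle)
        rw [h2, hcard, hcard] at h1
        have h3 : Fintype.card {j // l ≤ lam j} =
            Fintype.card {j // l+1 ≤ lam j} + Fintype.card {j // lam j = l} := by
          rw [← Fintype.card_subtype_or_disjoint]
          · apply Fintype.card_congr
            apply Equiv.subtypeEquivRight
            intro j; omega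
          · rw [Pi.disjoint_iff]; intro j
            rw [Prop.disjoint_iff]
            omega
        omega
      let e := (Module.finBasisOfFinrankEq K C hfr).reindex (Fintype.equivFin {j // lam j = l}).symm
      let b' : ι → V := fun j => if h : lam j = l then ((e ⟨j, h⟩ : C) : N l) else b j
      have hb'1 : ∀ j, l+1 ≤ lam j → b' j = b j := by
        intro j hj
        simp only [b']; rw [dif_neg (by omega)]
      have hb'2 : ∀ (j) (h : lam j = l), b' j = ((e ⟨j, h⟩ : C) : N l) := by
        intro j h
        simp only [b']; rw [dif_pos h]
      refine ⟨b', ?_, ?_⟩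
      · have hset : {j | l ≤ lam j} = {j | l+1 ≤ lam j} ∪ {j | lam j = l} := by
          ext j; simp only [Set.mem_ofPred_eq, Set.mem_union]; omega
        rw [hset]
        have i1 : LinearIndepOn K b' {j | l+1 ≤ lam j} := by
          refine hb1.congr ?_
          intro j hj; exact (hb'1 j hj).symm
        have i2 : LinearIndepOn K b' {j | lam j = l} := by
          have := (e.linearIndependent.map' C.subtype (Submodule.ker_subtype _)).map' (N l).subtype
            (Submodule.ker_subtype _)
          have h2 := this.comp (fun x : {j | lam j = l} => (⟨x.1, x.2⟩ : {j // lam j = l}))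
            (fun x y hxy => Subtype.ext (congrArg (fun z => z.1) hxy))
          rw [LinearIndepOn]
          have h3 : (fun x : {j | lam j = l} => b' x.1) =
              fun x => (((e ⟨x.1, x.2⟩ : C) : N l) : V) := funext fun x => hb'2 x.1 x.2
          rw [h3]
          exact h2
        refine i1.union i2 ?_
        have s1 : Submodule.span K (b' '' {j | l+1 ≤ lam j}) ≤ N (l+1) := by
          rw [Submodule.span_le]
          rintro _ ⟨j, hj, rfl⟩
          rw [hb'1 j hj]
          exact hN hj (hb2 j hj)
        have s2 : Submodule.span K (b' '' {j | lam j = l}) ≤ C.map (N l).subtype := by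
          rw [Submodule.span_le]
          rintro _ ⟨j, hj, rfl⟩
          rw [hb'2 j hj]
          exact ⟨_, (e ⟨j, hj⟩).2, rfl⟩
        refine Disjoint.mono s1 s2 ?_
        rw [Submodule.disjoint_def]
        rintro _ hx ⟨y, hy, rfl⟩
        have := (Submodule.disjoint_def.1 hC.disjoint) y hx hy
        simp [this]
      · intro j hj
        rcases Nat.eq_or_lt_of_le hj with h | h
        · rw [hb'2 j h.symm]
          refine (le_of_eq (congrArg N h)) ?_
          exact (((e ⟨j, h.symm⟩ : C) : N l)).2
        · rw [hb'1 j h]; exact hb2 j h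
  obtain ⟨b, hb1, hb2⟩ := main m le_rfl
  simp only [Nat.sub_self, Nat.zero_le, Set.ofPred_true, forall_true_left] at hb1 hb2
  rw [linearIndepOn_univ_iff] at hb1
  refine ⟨b, hb1, fun l => ?_⟩
  apply Submodule.eq_of_le_of_finrank_eq
  · rw [Submodule.span_le]
    rintro _ ⟨j, hj, rfl⟩
    exact hN hj (hb2 j)
  · rw [hcard, Set.image_eq_range]
    exact finrank_span_eq_card (hb1.comp (fun j : {j // l ≤ lam j} => j.1) Subtype.val_injective)

lemma iwasawa {E : Type*} [Field E] (V : ValuationSubring E) (n : ℕ)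
    (g : Matrix (Fin n) (Fin n) E) :
    ∃ k k' : Matrix (Fin n) (Fin n) V, k * k' = 1 ∧ k' * k = 1 ∧
      ∀ i j, j < i → ((k'.map V.subtype) * g) i j = 0 := by
  suffices H : ∀ c ≤ n, ∃ k k' : Matrix (Fin n) (Fin n) V, k * k' = 1 ∧ k' * k = 1 ∧
      ∀ i j : Fin n, (j : ℕ) < c → j < i → ((k'.map V.subtype) * g) i j = 0 by
    obtain ⟨k, k', h1, h2, h3⟩ := H n le_rfl
    exact ⟨k, k', h1, h2, fun i j hij => h3 i j j.2 hij⟩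
  intro c
  induction c with
  | zero => intro _; exact ⟨1, 1, by simp, by simp, by simp⟩
  | succ c ih =>
    intro hc
    obtain ⟨k, k', h1, h2, h3⟩ := ih (by omega)
    let c' : Fin n := ⟨c, hc⟩
    set M := (k'.map V.subtype) * g with hM
    -- pivot
    obtain ⟨p, hp, hpmax⟩ := Finset.exists_max_image (Finset.univ.filter (fun i => c' ≤ i))
      (fun i => V.valuation (M i c')) ⟨c', by simp⟩
    simp only [Finset.mem_filter, Finset.mem_univ, true_and] at hp hpmax
    -- multipliers
    have hmul : ∀ i, c' ≤ i → ∃ u : V, M i c' = (u : E) * M p c' := by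
      intro i hi
      by_cases h0 : M p c' = 0
      · refine ⟨0, ?_⟩
        have := hpmax i hi
        rw [h0, map_zero, le_zero_iff, map_eq_zero] at this
        simp [this]
      · refine ⟨⟨M i c' / M p c', ?_⟩, ?_⟩
        · rw [← V.valuation_le_one_iff, map_div₀]
          exact div_le_one_of_le₀ (hpmax i hi) zero_le
        · simp [h0]
    choose! u hu using hmul
    let σ := Equiv.swap c' p
    let P : Matrix (Fin n) (Fin n) V := fun i j => if σ i = j then 1 else 0
    have hP : ∀ i j, P i j = if σ i = j then 1 else 0 := fun _ _ => rfl
    have hPP : P * P = 1 := by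
      refine Matrix.ext fun i j => ?_
      rw [Matrix.mul_apply, Finset.sum_eq_single (σ i)]
      · rw [hP, hP, if_pos rfl, one_mul, show σ (σ i) = i from Equiv.swap_apply_self _ _ _]
        rfl
      · intro b _ hb
        rw [hP, if_neg hb.symm, zero_mul]
      · simp
    let w : Fin n → V := fun i => if c' < i then u (σ i) else 0
    let X : Matrix (Fin n) (Fin n) V := fun i j => if j = c' then w i else 0
    have hX : ∀ i j, X i j = if j = c' then w i else 0 := fun _ _ => rfl
    have hwc : w c' = 0 := by simp [w]
    have hXX : X * X = 0 := by
      refine Matrix.ext fun i j => ?_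
      rw [Matrix.mul_apply]
      apply Finset.sum_eq_zero
      intro b _
      rw [hX, hX]
      by_cases hb : b = c'
      · subst hb; rw [hwc]; simp
      · rw [if_neg hb, zero_mul]
    refine ⟨k * P * (1 + X), (1 - X) * P * k', ?_, ?_, ?_⟩
    · have e1 : (1 + X) * (1 - X) = 1 := by
        rw [add_mul, mul_sub, mul_sub, hXX]; simp
      calc k * P * (1 + X) * ((1 - X) * P * k') = k * P * ((1 + X) * (1 - X)) * P * k' := by
            simp only [mul_assoc]
        _ = k * (P * P) * k' := by rw [e1]; simp only [mul_assoc, mul_one]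
        _ = 1 := by rw [hPP, mul_one, h1]
    · have e1 : (1 - X) * (1 + X) = 1 := by
        rw [sub_mul, mul_add, mul_add, hXX]; simp
      calc (1 - X) * P * k' * (k * P * (1 + X)) = (1 - X) * (P * (k' * k) * P) * (1 + X) := by
            simp only [mul_assoc]
        _ = 1 := by rw [h2, mul_one, hPP, mul_one, e1]
    · have hmap : (((1 - X) * P * k').map V.subtype) * g =
          ((1 - X).map V.subtype) * ((P.map V.subtype) * M) := by
        rw [Matrix.map_mul, Matrix.map_mul, hM]; simp only [mul_assoc]
      have hPM : ∀ i j, ((P.map V.subtype) * M) i j = M (σ i) j := by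
        intro i j
        rw [Matrix.mul_apply, Finset.sum_eq_single (σ i)]
        · rw [Matrix.map_apply, hP, if_pos rfl, map_one, one_mul]
        · intro b _ hb
          rw [Matrix.map_apply, hP, if_neg hb.symm, map_zero, zero_mul]
        · simp
      have hXM : ∀ (N : Matrix (Fin n) (Fin n) E) i j, (((1 - X).map V.subtype) * N) i j
          = N i j - (w i : E) * N c' j := by
        intro N i j
        have : (1 - X).map V.subtype = 1 - X.map V.subtype := by
          ext a b
          by_cases hab : a = b <;> simp [hab]
        rw [this, sub_mul, one_mul, Matrix.sub_apply]
        congr 1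
        rw [Matrix.mul_apply, Finset.sum_eq_single c']
        · rw [Matrix.map_apply, hX, if_pos rfl]; rfl
        · intro b _ hb; rw [Matrix.map_apply, hX, if_neg hb, map_zero, zero_mul]
        · simp
      intro i j hj hij
      rw [hmap, hXM, hPM, hPM]
      have hσc : σ c' = p := Equiv.swap_apply_left _ _
      rw [hσc]
      have hσge : ∀ i, c' ≤ i → c' ≤ σ i := by
        intro i hi
        simp only [σ, Equiv.swap_apply_def]
        split_ifs <;> simp_all
      have hσlt : ∀ i, i < c' → σ i = i := by
        intro i hi
        apply Equiv.swap_apply_of_ne_of_ne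
        · exact hi.ne
        · exact (hi.trans_le hp).ne
      rcases Nat.lt_succ_iff_lt_or_eq.1 hj with hjc | hjc
      · have hjc' : j < c' := hjc
        have hz : ∀ a, c' ≤ a → M a j = 0 := fun a ha => h3 a j hjc (hjc'.trans_le ha)
        rw [hz p hp, mul_zero, sub_zero]
        rcases lt_or_ge i c' with hi | hi
        · rw [hσlt i hi]; exact h3 i j hjc hij
        · exact hz _ (hσge i hi)
      · have hjc' : j = c' := Fin.ext hjc
        subst hjc'
        have : w i = u (σ i) := by simp only [w]; rw [if_pos hij]
        rw [this, hu (σ i) (hσge i hij.le), sub_self]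

namespace QuiverData

/-- The matrix of an arrow. -/
def matOf (Q : QuiverData) (d : Fin Q.n → ℕ) {R : Type*} (x : Coords Q d → R)
    (a : Fin Q.numArrows) : Matrix (Fin (d (Q.tgt a))) (Fin (d (Q.src a))) R :=
  fun j k => x ⟨a, (j, k)⟩

/-- Matrix form of having a filtration governed by the sequence encoded in `lam`. -/
def MF (Q : QuiverData) (d : Fin Q.n → ℕ) (lam : ∀ i, Fin (d i) → ℕ) {R : Type*} [CommRing R]
    (x : Coords Q d → R) : Prop :=
  ∃ g h : ∀ i, Matrix (Fin (d i)) (Fin (d i)) R, (∀ i, g i * h i = 1 ∧ h i * g i = 1) ∧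
    ∀ a j k, lam _ j ≤ lam _ k → (h (Q.tgt a) * matOf Q d x a * g (Q.src a)) j k = 0

variable {Q : QuiverData} {d : Fin Q.n → ℕ} {lam : ∀ i, Fin (d i) → ℕ}

lemma MF_map {R R' : Type*} [CommRing R] [CommRing R'] (f : R →+* R') {x : Coords Q d → R}
    (hx : MF Q d lam x) : MF Q d lam (fun c => f (x c)) := by
  obtain ⟨g, h, h1, h2⟩ := hx
  refine ⟨fun i => (g i).map f, fun i => (h i).map f, fun i => ⟨?_, ?_⟩, ?_⟩
  · rw [← Matrix.map_mul, (h1 i).1, Matrix.map_one f (map_zero f) (map_one f)]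
  · rw [← Matrix.map_mul, (h1 i).2, Matrix.map_one f (map_zero f) (map_one f)]
  · intro a j k hjk
    have : matOf Q d (fun c => f (x c)) a = (matOf Q d x a).map f := rfl
    rw [this, ← Matrix.map_mul, ← Matrix.map_mul, Matrix.map_apply, h2 a j k hjk, map_zero]

lemma MF_pi {Y K : Type*} [CommRing K] (x : Y → Coords Q d → K)
    (hx : ∀ y, MF Q d lam (x y)) : MF Q d lam (R := Y → K) (fun c y => x y c) := by
  choose g h h1 h2 using hx
  refine ⟨fun i => Matrix.of fun j k y => g y i j k, fun i => Matrix.of fun j k y => h y i j k,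
    fun i => ⟨?_, ?_⟩, ?_⟩
  · refine Matrix.ext fun j k => funext fun y => ?_
    have := congrFun (congrFun (h1 y i).1 j) k
    rw [Matrix.mul_apply] at this ⊢
    simp only [Matrix.of_apply, Finset.sum_apply, Pi.mul_apply]
    rw [this]
    by_cases hjk : j = k
    · subst hjk; simp
    · simp [Matrix.one_apply_ne hjk]
  · refine Matrix.ext fun j k => funext fun y => ?_
    have := congrFun (congrFun (h1 y i).2 j) k
    rw [Matrix.mul_apply] at this ⊢
    simp only [Matrix.of_apply, Finset.sum_apply, Pi.mul_apply]
    rw [this]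
    by_cases hjk : j = k
    · subst hjk; simp
    · simp [Matrix.one_apply_ne hjk]
  · intro a j k hjk
    refine funext fun y => ?_
    have := h2 y a j k hjk
    rw [Matrix.mul_apply] at this ⊢
    simp only [Matrix.mul_apply, Matrix.of_apply, Finset.sum_apply, Pi.mul_apply] at this ⊢
    exact this

lemma MF_descent {K k : Type*} [Field K] [IsAlgClosed K] [Field k] [Algebra K k]
    {x : Coords Q d → K} (hx : MF Q d lam (fun c => algebraMap K k (x c))) : MF Q d lam x := by
  obtain ⟨g, h, h1, h2⟩ := hx
  let σ := Bool × (Σ i, Fin (d i) × Fin (d i))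
  let v : σ → k := fun s => if s.1 then g s.2.1 s.2.2.1 s.2.2.2 else h s.2.1 s.2.2.1 s.2.2.2
  obtain ⟨pt, hpt⟩ := null_descent (K := K) v
  let G : ∀ i, Matrix (Fin (d i)) (Fin (d i)) (MvPolynomial σ K) :=
    fun i => Matrix.of fun j l => MvPolynomial.X (true, ⟨i, (j, l)⟩)
  let H : ∀ i, Matrix (Fin (d i)) (Fin (d i)) (MvPolynomial σ K) :=
    fun i => Matrix.of fun j l => MvPolynomial.X (false, ⟨i, (j, l)⟩)
  let A : MvPolynomial σ K →+* k := (MvPolynomial.aeval v : MvPolynomial σ K →ₐ[K] k).toRingHom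
  let B : MvPolynomial σ K →+* K := MvPolynomial.eval pt
  have hAB : ∀ P, A P = 0 → B P = 0 := hpt
  have hG : ∀ i, (G i).map A = g i := by
    intro i; refine Matrix.ext fun j l => ?_
    simp [G, A, v]
  have hH : ∀ i, (H i).map A = h i := by
    intro i; refine Matrix.ext fun j l => ?_
    simp [H, A, v]
  refine ⟨fun i => (G i).map B, fun i => (H i).map B, fun i => ⟨?_, ?_⟩, ?_⟩
  · rw [← Matrix.map_mul, ← Matrix.map_one B (map_zero B) (map_one B)]
    refine Matrix.ext fun j l => ?_
    rw [Matrix.map_apply, Matrix.map_apply, ← sub_eq_zero, ← map_sub]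
    apply hAB
    have := congrFun (congrFun (h1 i).1 j) l
    rw [← hG, ← hH, ← Matrix.map_mul, ← Matrix.map_one A (map_zero A) (map_one A),
      Matrix.map_apply, Matrix.map_apply] at this
    rw [map_sub, this, sub_self]
  · rw [← Matrix.map_mul, ← Matrix.map_one B (map_zero B) (map_one B)]
    refine Matrix.ext fun j l => ?_
    rw [Matrix.map_apply, Matrix.map_apply, ← sub_eq_zero, ← map_sub]
    apply hAB
    have := congrFun (congrFun (h1 i).2 j) l
    rw [← hG, ← hH, ← Matrix.map_mul, ← Matrix.map_one A (map_zero A) (map_one A),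
      Matrix.map_apply, Matrix.map_apply] at this
    rw [map_sub, this, sub_self]
  · intro a j l hjl
    let Y := matOf Q d (fun c => (MvPolynomial.C (x c) : MvPolynomial σ K)) a
    have hYB : matOf Q d x a = Y.map B := by
      refine Matrix.ext fun j l => ?_
      simp [Y, B, matOf]
    have hYA : matOf Q d (fun c => algebraMap K k (x c)) a = Y.map A := by
      refine Matrix.ext fun j l => ?_
      simp [Y, A, matOf]
    rw [hYB, ← Matrix.map_mul, ← Matrix.map_mul, Matrix.map_apply]
    apply hAB
    have := h2 a j l hjl
    rwa [hYA, ← hG, ← hH, ← Matrix.map_mul, ← Matrix.map_mul, Matrix.map_apply] at this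

lemma MF_val {E : Type*} [Field E] (V : ValuationSubring E) (hlam : ∀ i, Antitone (lam i))
    {x : Coords Q d → V} (hx : MF Q d lam (fun c => V.subtype (x c))) : MF Q d lam x := by
  obtain ⟨g, h, h1, h2⟩ := hx
  choose k k' hk1 hk2 hk3 using fun i => iwasawa V (d i) (g i)
  refine ⟨k, k', fun i => ⟨hk1 i, hk2 i⟩, ?_⟩
  intro a j l hjl
  -- the triangular factor and its inverse
  let b : ∀ i, Matrix (Fin (d i)) (Fin (d i)) E := fun i => (k' i).map V.subtype * g i
  let c : ∀ i, Matrix (Fin (d i)) (Fin (d i)) E := fun i => h i * (k i).map V.subtype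
  have hkk : ∀ i, (k i).map V.subtype * (k' i).map V.subtype = 1 := fun i => by
    rw [← Matrix.map_mul, hk1, Matrix.map_one V.subtype (map_zero _) (map_one _)]
  have hkk' : ∀ i, (k' i).map V.subtype * (k i).map V.subtype = 1 := fun i => by
    rw [← Matrix.map_mul, hk2, Matrix.map_one V.subtype (map_zero _) (map_one _)]
  have hbc : ∀ i, b i * c i = 1 := fun i => by
    calc b i * c i = (k' i).map V.subtype * (g i * h i) * (k i).map V.subtype := by
          simp only [b, c, mul_assoc]
      _ = 1 := by rw [(h1 i).1, mul_one, hkk']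
  have hb : ∀ i, (b i).BlockTriangular id := fun i j l hjl => hk3 i j l hjl
  have hc : ∀ i, (c i).BlockTriangular id := fun i => by
    have : c i = (b i)⁻¹ := (Matrix.inv_eq_right_inv (hbc i)).symm
    rw [this]
    have : Invertible (b i) := ⟨c i, mul_eq_one_comm.1 (hbc i), hbc i⟩
    exact Matrix.blockTriangular_inv_of_blockTriangular (hb i)
  have e : (k' (Q.tgt a) * matOf Q d x a * k (Q.src a)).map V.subtype =
      b (Q.tgt a) * (h (Q.tgt a) * matOf Q d (fun c => V.subtype (x c)) a * g (Q.src a)) *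
        c (Q.src a) := by
    have hm : matOf Q d (fun c => V.subtype (x c)) a = (matOf Q d x a).map V.subtype := rfl
    rw [hm, Matrix.map_mul, Matrix.map_mul]
    have hg := fun (Z : Matrix (Fin (d (Q.tgt a))) (Fin (d (Q.src a))) E) =>
      (Matrix.mul_assoc (g (Q.tgt a)) (h (Q.tgt a)) Z).symm
    have hh := fun (Z : Matrix (Fin (d (Q.src a))) (Fin (d (Q.src a))) E) =>
      (Matrix.mul_assoc (g (Q.src a)) (h (Q.src a)) Z).symm
    simp only [b, c, Matrix.mul_assoc]
    rw [hg, (h1 _).1, hh, (h1 _).1, Matrix.one_mul, Matrix.one_mul]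
  have e2 := congrFun (congrFun e j) l
  rw [Matrix.map_apply] at e2
  apply V.subtype_injective
  rw [e2, map_zero, Matrix.mul_apply]
  refine Finset.sum_eq_zero fun s _ => ?_
  rcases lt_or_ge l s with hs | hs
  · rw [show c (Q.src a) s l = 0 from hc _ hs, mul_zero]
  · rw [Matrix.mul_apply, Finset.sum_eq_zero, zero_mul]
    intro r _
    rcases lt_or_ge r j with hr | hr
    · rw [show b (Q.tgt a) j r = 0 from hb _ hr, zero_mul]
    · rw [h2 a r s, mul_zero]
      exact (hlam _ hr).trans (hjl.trans (hlam _ hs))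

lemma MF_closed_aux {K E : Type*} [Field K] [IsAlgClosed K] [Field E]
    (hlam : ∀ i, Antitone (lam i))
    (x : Coords Q d → K) (f : MvPolynomial (Coords Q d) K →+* E)
    (hf0 : ∀ q, MvPolynomial.eval x q ≠ 0 → f q ≠ 0)
    (s0 : MF Q d lam (fun c => f (MvPolynomial.X c))) : MF Q d lam x := by
  let m : Ideal (MvPolynomial (Coords Q d) K) := RingHom.ker (MvPolynomial.eval x)
  have hm : m.IsPrime := RingHom.ker_isPrime _
  have hf : ∀ q : m.primeCompl, IsUnit (f q) := fun q => isUnit_iff_ne_zero.2 (hf0 q q.2)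
  let F : Localization.AtPrime m →+* E := IsLocalization.lift hf
  obtain ⟨V, hV, hloc⟩ := IsLocalRing.exists_factor_valuationRing F
  let FV : Localization.AtPrime m →+* V := F.codRestrict V.toSubring hV
  let AV : MvPolynomial (Coords Q d) K →+* V := FV.comp (algebraMap _ (Localization.AtPrime m))
  have hAV : ∀ q, V.subtype (AV q) = f q := fun q => IsLocalization.lift_eq hf q
  have s1 : MF Q d lam (fun c => V.subtype (AV (MvPolynomial.X c))) := by
    simpa only [hAV] using s0
  have s2 := MF_val V hlam s1
  let res : V →+* IsLocalRing.ResidueField V := IsLocalRing.residue V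
  have s3 := MF_map res s2
  let alg : K →+* IsLocalRing.ResidueField V := (res.comp AV).comp MvPolynomial.C
  let _ : Algebra K (IsLocalRing.ResidueField V) := alg.toAlgebra
  apply MF_descent (k := IsLocalRing.ResidueField V)
  refine (congrArg (fun z => MF Q d lam z) (funext fun c => ?_)).mpr s3
  have hmem : (MvPolynomial.C (x c) - MvPolynomial.X c : MvPolynomial (Coords Q d) K) ∈ m := by
    simp [m, RingHom.mem_ker]
  change res (AV (MvPolynomial.C (x c))) = res (AV (MvPolynomial.X c))
  rw [← sub_eq_zero, ← map_sub, ← map_sub]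
  rw [IsLocalRing.residue_eq_zero_iff]
  have hnu : algebraMap _ (Localization.AtPrime m) (MvPolynomial.C (x c) - MvPolynomial.X c) ∈
      IsLocalRing.maximalIdeal (Localization.AtPrime m) := (IsLocalization.AtPrime.to_map_mem_maximal_iff (Localization.AtPrime m) m _).2 hmem
  rw [IsLocalRing.mem_maximalIdeal, mem_nonunits_iff] at hnu ⊢
  intro hu
  exact hnu (hloc.map_nonunit _ hu)

lemma MF_closed {K : Type} [Field K] [IsAlgClosed K] (hlam : ∀ i, Antitone (lam i))
    (x : Coords Q d → K)
    (hx : ∀ p : MvPolynomial (Coords Q d) K, MvPolynomial.eval x p ≠ 0 →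
      ∃ y : Coords Q d → K, MF Q d lam y ∧ MvPolynomial.eval y p ≠ 0) : MF Q d lam x := by
  let A := MvPolynomial (Coords Q d) K
  let Y := {y : Coords Q d → K // MF Q d lam y}
  let ev : A →+* (Y → K) := RingHom.pi fun y => MvPolynomial.eval y.1
  let m : Ideal A := RingHom.ker (MvPolynomial.eval x)
  have hm : m.IsPrime := RingHom.ker_isPrime _
  obtain ⟨p, hp, -, hdis⟩ := Ideal.exists_le_prime_disjoint (⊥ : Ideal (Y → K))
    (m.primeCompl.map ev) (by
      rw [Set.disjoint_left]
      rintro _ hz ⟨q, hq, rfl⟩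
      obtain ⟨y, hy, hqy⟩ := hx q hq
      exact hqy (congrFun (show ev q = 0 from hz) ⟨y, hy⟩))
  let E := FractionRing ((Y → K) ⧸ p)
  let toE : (Y → K) →+* E := (algebraMap ((Y → K) ⧸ p) E).comp (Ideal.Quotient.mk p)
  let f : A →+* E := toE.comp ev
  have hf : ∀ q : m.primeCompl, IsUnit (f q) := by
    intro q
    rw [isUnit_iff_ne_zero]
    intro h0
    have h1 : Ideal.Quotient.mk p (ev q) = 0 := by
      apply IsFractionRing.injective ((Y → K) ⧸ p) E
      rw [map_zero]; exact h0
    exact Set.disjoint_left.1 hdis (Ideal.Quotient.eq_zero_iff_mem.1 h1) ⟨q, q.2, rfl⟩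
  refine MF_closed_aux hlam x f (fun q hq => (hf ⟨q, hq⟩).ne_zero) ?_
  have h0 := MF_map toE (MF_pi (fun y : Y => y.1) (fun y => y.2))
  refine (congrArg (fun z => MF Q d lam z) (funext fun c => ?_)).mpr h0
  change toE (ev (MvPolynomial.X c)) = _
  congr 1
  funext y
  exact MvPolynomial.eval_X c

end QuiverData

namespace QuiverData

section carrier

variable {Q : QuiverData} {d : Fin Q.n → ℕ} {K : Type} [Field K]

/-- The component at a vertex. -/
def comp (i : Fin Q.n) : Carrier Q d K →ₗ[K] (Fin (d i) → K) :=
  LinearMap.funLeft K K (fun v => (⟨i, v⟩ : Σ i : Fin Q.n, Fin (d i)))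

/-- The inclusion of a component. -/
def incl (i : Fin Q.n) (v : Fin (d i) → K) : Carrier Q d K :=
  fun jv => (Pi.single i v : ∀ i, Fin (d i) → K) jv.1 jv.2

lemma comp_apply (i : Fin Q.n) (m : Carrier Q d K) (v : Fin (d i)) : comp i m v = m ⟨i, v⟩ := rfl

lemma comp_incl (i : Fin Q.n) (v : Fin (d i) → K) : comp i (incl i v) = v := by
  funext j; simp [comp_apply, incl]

lemma comp_incl_ne {i i' : Fin Q.n} (h : i' ≠ i) (v : Fin (d i) → K) :
    comp i' (incl i v) = 0 := by
  funext j; simp [comp_apply, incl, h]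

lemma carrier_ext {m m' : Carrier Q d K} (h : ∀ i, comp i m = comp i m') : m = m' := by
  funext ⟨i, j⟩; exact congrFun (h i) j

lemma comp_proj (i : Fin Q.n) (m : Carrier Q d K) : comp i (proj Q d K i m) = comp i m := by
  funext j; simp [comp_apply, proj]

lemma comp_proj_ne {i i' : Fin Q.n} (h : i' ≠ i) (m : Carrier Q d K) :
    comp i' (proj Q d K i m) = 0 := by
  funext j; simp [comp_apply, proj, h]

lemma proj_congr {i : Fin Q.n} {m m' : Carrier Q d K} (h : comp i m = comp i m') :
    proj Q d K i m = proj Q d K i m' := by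
  apply carrier_ext
  intro i'
  by_cases hi : i' = i
  · subst hi; rw [comp_proj, comp_proj, h]
  · rw [comp_proj_ne hi, comp_proj_ne hi]

lemma proj_sum (m : Carrier Q d K) : ∑ i, proj Q d K i m = m := by
  funext ⟨i, j⟩
  rw [Finset.sum_apply, Finset.sum_eq_single i]
  · simp [proj]
  · intro b _ hb; simp [proj, hb.symm]
  · simp

lemma comp_arrow (x : RepSpace Q d K) (a : Fin Q.numArrows) (m : Carrier Q d K) :
    comp (Q.tgt a) (arrowMap Q d K x a m) =
      (matOf Q d x a).mulVec (comp (Q.src a) m) := by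
  funext j
  simp [comp_apply, arrowMap, Matrix.mulVec, dotProduct, matOf]

lemma comp_arrow_ne (x : RepSpace Q d K) (a : Fin Q.numArrows) {i : Fin Q.n} (h : i ≠ Q.tgt a)
    (m : Carrier Q d K) : comp i (arrowMap Q d K x a m) = 0 := by
  funext j
  simp [comp_apply, arrowMap, h]

lemma vdim_eq (N : Submodule K (Carrier Q d K)) (i : Fin Q.n) :
    vdim Q d K N i = Module.finrank K (N.map (comp i)) := by
  have h1 : N.map (comp i) = (N.map (proj Q d K i)).map (comp i) := by
    rw [← Submodule.map_comp]
    congr 1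
    exact LinearMap.ext fun m => (comp_proj i m).symm
  have h2 : (N.map (proj Q d K i)).map (comp i) =
      LinearMap.range ((comp i).domRestrict (N.map (proj Q d K i))) := by
    rw [LinearMap.range_domRestrict]
  have h3 : Function.Injective ((comp i).domRestrict (N.map (proj Q d K i))) := by
    rintro ⟨_, m, hm, rfl⟩ ⟨_, m', hm', rfl⟩ he
    have he' : comp i (proj Q d K i m) = comp i (proj Q d K i m') := he
    rw [comp_proj, comp_proj] at he'
    exact Subtype.ext (proj_congr he')
  rw [h1, h2, LinearMap.finrank_range_of_inj h3, vdim]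

lemma mem_iff_comp {N : Submodule K (Carrier Q d K)} (hN : ∀ i, N.map (proj Q d K i) ≤ N)
    (m : Carrier Q d K) : m ∈ N ↔ ∀ i, comp i m ∈ N.map (comp i) := by
  refine ⟨fun h i => ⟨m, h, rfl⟩, fun h => ?_⟩
  rw [← proj_sum m]
  refine Submodule.sum_mem _ fun i _ => ?_
  obtain ⟨m', hm', he⟩ := h i
  rw [proj_congr he.symm]
  exact hN i ⟨m', hm', rfl⟩

variable (lam : ∀ i, Fin (d i) → ℕ)

/-- The filtration defined by a graded change of basis. -/
def stdF (h : ∀ i, Matrix (Fin (d i)) (Fin (d i)) K) (l : ℕ) : Submodule K (Carrier Q d K) where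
  carrier := {m | ∀ i j, lam i j < l → ((h i).mulVec (comp i m)) j = 0}
  add_mem' := by
    intro u v hu hv i j hj
    rw [map_add, Matrix.mulVec_add, Pi.add_apply, hu i j hj, hv i j hj, add_zero]
  zero_mem' := by
    intro i j _
    rw [map_zero, Matrix.mulVec_zero]; rfl
  smul_mem' := by
    intro c u hu i j hj
    rw [map_smul, Matrix.mulVec_smul, Pi.smul_apply, hu i j hj, smul_zero]

variable {lam}

lemma mem_stdF {h : ∀ i, Matrix (Fin (d i)) (Fin (d i)) K} {l : ℕ} {m : Carrier Q d K} :
    m ∈ stdF lam h l ↔ ∀ i j, lam i j < l → ((h i).mulVec (comp i m)) j = 0 := Iff.rfl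

lemma stdF_zero (h : ∀ i, Matrix (Fin (d i)) (Fin (d i)) K) : stdF lam h 0 = ⊤ := by
  rw [eq_top_iff]; intro m _ i j hj; omega

lemma stdF_anti (h : ∀ i, Matrix (Fin (d i)) (Fin (d i)) K) : Antitone (stdF lam h) :=
  fun _ _ hl _ hm i j hj => hm i j (hj.trans_le hl)

lemma stdF_bot {g h : ∀ i, Matrix (Fin (d i)) (Fin (d i)) K} (hgh : ∀ i, g i * h i = 1)
    {n : ℕ} (hn : ∀ i j, lam i j < n) : stdF lam h n = ⊥ := by
  rw [eq_bot_iff]; intro m hm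
  rw [Submodule.mem_bot]
  apply carrier_ext
  intro i
  have : (h i).mulVec (comp i m) = 0 := funext fun j => hm i j (hn i j)
  rw [← Matrix.one_mulVec (comp i m), ← hgh i, ← Matrix.mulVec_mulVec, this, Matrix.mulVec_zero,
    map_zero]

lemma stdF_graded (h : ∀ i, Matrix (Fin (d i)) (Fin (d i)) K) (l : ℕ) (i : Fin Q.n) :
    (stdF lam h l).map (proj Q d K i) ≤ stdF lam h l := by
  rintro _ ⟨m, hm, rfl⟩ i' j hj
  by_cases hi : i' = i
  · subst hi; rw [comp_proj]; exact hm _ j hj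
  · rw [comp_proj_ne hi, Matrix.mulVec_zero]; rfl

lemma stdF_vdim {g h : ∀ i, Matrix (Fin (d i)) (Fin (d i)) K}
    (hgh : ∀ i, g i * h i = 1 ∧ h i * g i = 1) (l : ℕ) (i : Fin Q.n) :
    vdim Q d K (stdF lam h l) i = Fintype.card {j // l ≤ lam i j} := by
  rw [vdim_eq]
  let e : ({j // l ≤ lam i j} → K) →ₗ[K] (Fin (d i) → K) :=
    (Matrix.toLin' (g i)) ∘ₗ (Function.ExtendByZero.linearMap K (Subtype.val))
  have hext : ∀ u : {j // l ≤ lam i j} → K, (h i).mulVec (e u) = Function.extend Subtype.val u 0 := by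
    intro u
    simp only [e, LinearMap.comp_apply, Matrix.toLin'_apply, Matrix.mulVec_mulVec, (hgh i).2,
      Matrix.one_mulVec]
    rfl
  have he : Function.Injective e := by
    intro u v huv
    have := hext u
    rw [huv, hext v] at this
    funext j
    have h2 := congrFun this j.1
    rw [Subtype.val_injective.extend_apply, Subtype.val_injective.extend_apply] at h2
    exact h2.symm
  have hr : (stdF lam h l).map (comp i) = LinearMap.range e := by
    ext v
    constructor
    · rintro ⟨m, hm, rfl⟩
      refine ⟨fun j => (h i).mulVec (comp i m) j.1, ?_⟩
      have h3 : (h i).mulVec (e (fun j => (h i).mulVec (comp i m) j.1)) =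
          (h i).mulVec (comp i m) := by
        rw [hext]
        funext j
        by_cases hj : l ≤ lam i j
        · exact Subtype.val_injective.extend_apply _ _ (⟨j, hj⟩ : {j // l ≤ lam i j})
        · rw [Function.extend_apply', hm i j (not_le.1 hj)]
          · rfl
          · rintro ⟨⟨j', hj'⟩, rfl⟩; exact hj hj'
      have h4 := congrArg (g i).mulVec h3
      simpa only [Matrix.mulVec_mulVec, (hgh i).1, Matrix.one_mulVec] using h4
    · rintro ⟨u, rfl⟩
      refine ⟨incl i (e u), ?_, comp_incl _ _⟩
      intro i' j hj
      by_cases hi : i' = i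
      · subst hi
        rw [comp_incl, hext, Function.extend_apply']
        · rfl
        · rintro ⟨⟨j', hj'⟩, rfl⟩; exact absurd hj (not_lt.2 hj')
      · rw [comp_incl_ne hi, Matrix.mulVec_zero]; rfl
  rw [hr, LinearMap.finrank_range_of_inj he, Module.finrank_fintype_fun_eq_card]

lemma flag_std {F : ℕ → Submodule K (Carrier Q d K)} (hF : Antitone F)
    (hgr : ∀ l i, (F l).map (proj Q d K i) ≤ F l) {n : ℕ} (hn : ∀ i j, lam i j < n)
    (hdim : ∀ l i, vdim Q d K (F l) i = Fintype.card {j // l ≤ lam i j}) :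
    ∃ g h : ∀ i, Matrix (Fin (d i)) (Fin (d i)) K, (∀ i, g i * h i = 1 ∧ h i * g i = 1) ∧
      ∀ l, F l = stdF lam h l := by
  classical
  have hb : ∀ i, ∃ b : Module.Basis (Fin (d i)) K (Fin (d i) → K),
      ∀ l, Submodule.span K (b '' {j | l ≤ lam i j}) = (F l).map (comp i) := by
    intro i
    obtain ⟨b, hb1, hb2⟩ := adapted_basis (fun l => (F l).map (comp i))
      (fun _ _ h => Submodule.map_mono (hF h)) (lam i) n (hn i)
      (fun l => by rw [← vdim_eq, hdim])
    refine ⟨basisOfPiSpaceOfLinearIndependent hb1, fun l => ?_⟩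
    rw [coe_basisOfPiSpaceOfLinearIndependent]
    exact hb2 l
  choose B hB using hb
  refine ⟨fun i => (Pi.basisFun K (Fin (d i))).toMatrix (B i),
    fun i => (B i).toMatrix (Pi.basisFun K (Fin (d i))), fun i => ⟨?_, ?_⟩, fun l => ?_⟩
  · exact Module.Basis.toMatrix_mul_toMatrix_flip _ _
  · exact Module.Basis.toMatrix_mul_toMatrix_flip _ _
  · ext m
    rw [mem_iff_comp (hgr l), mem_stdF]
    refine forall_congr' fun i => ?_
    rw [← hB, Module.Basis.mem_span_image]
    have hv : ∀ v : Fin (d i) → K,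
        ((B i).toMatrix (Pi.basisFun K (Fin (d i)))).mulVec v = (B i).repr v := by
      intro v
      have := Module.Basis.toMatrix_mulVec_repr (Pi.basisFun K (Fin (d i))) (B i) v
      rw [← this]
      congr 1
    rw [hv]
    constructor
    · intro h j hj
      by_contra h0
      have := h (Finsupp.mem_support_iff.2 h0)
      exact absurd hj (not_lt.2 this)
    · intro h j hj
      by_contra h0
      exact (Finsupp.mem_support_iff.1 hj) (h j (not_le.1 h0))

lemma stdF_arrow {g h : ∀ i, Matrix (Fin (d i)) (Fin (d i)) K}
    (hgh : ∀ i, g i * h i = 1 ∧ h i * g i = 1) {x : RepSpace Q d K}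
    (hx : ∀ a j k, lam _ j ≤ lam _ k → (h (Q.tgt a) * matOf Q d x a * g (Q.src a)) j k = 0)
    (l : ℕ) (a : Fin Q.numArrows) :
    (stdF lam h l).map (arrowMap Q d K x a) ≤ stdF lam h (l+1) := by
  rintro _ ⟨m, hm, rfl⟩ i j hj
  by_cases hi : i = Q.tgt a
  · subst hi
    have : (h (Q.tgt a)).mulVec ((matOf Q d x a).mulVec (comp (Q.src a) m)) =
        (h (Q.tgt a) * matOf Q d x a * g (Q.src a)).mulVec
          ((h (Q.src a)).mulVec (comp (Q.src a) m)) := by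
      rw [Matrix.mulVec_mulVec, Matrix.mulVec_mulVec, Matrix.mul_assoc _ (g _), (hgh _).1,
        Matrix.mul_one]
    rw [comp_arrow, this, Matrix.mulVec, dotProduct]
    refine Finset.sum_eq_zero fun k _ => ?_
    rcases lt_or_ge (lam _ k) l with hk | hk
    · rw [hm _ k hk, mul_zero]
    · rw [hx a j k (by omega), zero_mul]
  · rw [comp_arrow_ne x a hi, Matrix.mulVec_zero]; rfl

lemma matrix_of_stdF {g h : ∀ i, Matrix (Fin (d i)) (Fin (d i)) K}
    (hgh : ∀ i, g i * h i = 1 ∧ h i * g i = 1) {x : RepSpace Q d K} {n : ℕ}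
    (hn : ∀ i j, lam i j < n)
    (hx : ∀ l < n, ∀ a, (stdF lam h l).map (arrowMap Q d K x a) ≤ stdF lam h (l+1)) :
    ∀ a j k, lam _ j ≤ lam _ k → (h (Q.tgt a) * matOf Q d x a * g (Q.src a)) j k = 0 := by
  intro a j k hjk
  have hm : incl (Q.src a) ((g (Q.src a)).mulVec (Pi.single k 1)) ∈ stdF lam h (lam _ k) := by
    intro i j' hj'
    by_cases hi : i = Q.src a
    · subst hi
      rw [comp_incl, Matrix.mulVec_mulVec, (hgh _).2, Matrix.one_mulVec, Pi.single_apply, if_neg]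
      rintro rfl; omega
    · rw [comp_incl_ne hi, Matrix.mulVec_zero]; rfl
  have := hx _ (hn _ k) a ⟨_, hm, rfl⟩ (Q.tgt a) j (by omega)
  rw [comp_arrow, comp_incl, Matrix.mulVec_mulVec, Matrix.mulVec_mulVec, Matrix.mulVec_single_one]
    at this
  rw [Matrix.mul_assoc]
  simpa [Matrix.mul_assoc] using this

end carrier

end QuiverData

namespace QuiverData

section final

variable {Q : QuiverData} {d : Fin Q.n → ℕ} {K : Type} [Field K]

lemma exists_lam_aux {L n : ℕ} (s : Fin (L+1) → ℕ) (hs : ∑ l, s l = n) :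
    ∃ lam : Fin n → ℕ, Antitone lam ∧ (∀ j, lam j < L+1) ∧
      ∀ l : Fin (L+1), Fintype.card {j // (l : ℕ) ≤ lam j} =
        s l + Fintype.card {j // (l : ℕ) + 1 ≤ lam j} := by
  have hc : Fintype.card (Σ l : Fin (L+1), Fin (s l)) = n := by
    simp [hs]
  let e := Fintype.equivFinOfCardEq hc
  let lam0 : Fin n → ℕ := fun j => ((e.symm j).1 : ℕ)
  let σ : Fin n ≃ Fin n := Fin.revPerm.trans (Tuple.sort lam0)
  refine ⟨fun j => lam0 (σ j), ?_, fun j => (e.symm (σ j)).1.2, fun l => ?_⟩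
  · intro a b hab
    exact Tuple.monotone_sort lam0 (Fin.rev_le_rev.2 hab)
  · have h1 : Fintype.card {j // lam0 (σ j) = l} = s l := by
      have e1 : {j // lam0 (σ j) = l} ≃ {p : Σ l : Fin (L+1), Fin (s l) // p.1 = l} :=
        (σ.trans e.symm).subtypeEquiv (fun j => by
          simp only [lam0, Equiv.trans_apply, Fin.ext_iff])
      rw [Fintype.card_congr e1, Fintype.card_congr (Equiv.sigmaSubtype l), Fintype.card_fin]
    rw [← h1]
    rw [Fintype.card_subtype, Fintype.card_subtype, Fintype.card_subtype,
      ← Finset.card_union_of_disjoint]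
    · congr 1
      ext j
      simp only [Finset.mem_filter, Finset.mem_univ, true_and, Finset.mem_union]
      omega
    · rw [Finset.disjoint_filter]
      intro j _ h
      have h' : lam0 (σ j) = l := h
      change ¬ ((l : ℕ) + 1 ≤ lam0 (σ j))
      omega

lemma exists_lam {L : ℕ} {S : Fin (L+1) → Fin Q.n → ℕ} (hS : hasDimVec S d) :
    ∃ lam : ∀ i, Fin (d i) → ℕ, (∀ i, Antitone (lam i)) ∧ (∀ i j, lam i j < L+1) ∧
      ∀ (l : Fin (L+1)) i, Fintype.card {j // (l : ℕ) ≤ lam i j} =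
        S l i + Fintype.card {j // (l : ℕ) + 1 ≤ lam i j} := by
  choose lam h1 h2 h3 using fun i => exists_lam_aux (fun l => S l i) (hS i)
  exact ⟨lam, h1, h2, fun l i => h3 i l⟩

lemma count_unique {L : ℕ} {f T : ℕ → ℕ} (s : Fin (L+1) → ℕ) (h0 : f (L+1) = T (L+1))
    (hf : ∀ l : Fin (L+1), f l = s l + f (l+1)) (hT : ∀ l : Fin (L+1), T l = s l + T (l+1)) :
    ∀ l ≤ L+1, f l = T l := by
  have : ∀ k ≤ L+1, f (L+1-k) = T (L+1-k) := by
    intro k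
    induction k with
    | zero => intro _; exact h0
    | succ k ih =>
      intro hk
      have h1 := hf ⟨L+1-(k+1), by omega⟩
      have h2 := hT ⟨L+1-(k+1), by omega⟩
      have h3 : L+1-(k+1)+1 = L+1-k := by omega
      simp only [h3] at h1 h2
      rw [h1, h2, ih (by omega)]
  intro l hl
  have := this (L+1-l) (by omega)
  rwa [Nat.sub_sub_self hl] at this

lemma card_zero {n L : ℕ} {lam : Fin n → ℕ} (h : ∀ j, lam j < L+1) {l : ℕ} (hl : L+1 ≤ l) :
    Fintype.card {j // l ≤ lam j} = 0 := by
  rw [Fintype.card_eq_zero_iff]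
  exact ⟨fun j => by have := h j.1; have := j.2; omega⟩

lemma vdim_bot (i : Fin Q.n) : vdim Q d K ⊥ i = 0 := by
  rw [vdim, Submodule.map_bot, finrank_bot]

lemma vdim_mono {N N' : Submodule K (Carrier Q d K)} (h : N ≤ N') (i : Fin Q.n) :
    vdim Q d K N i ≤ vdim Q d K N' i :=
  Submodule.finrank_mono (Submodule.map_mono h)

variable {L : ℕ} {S : Fin (L+1) → Fin Q.n → ℕ} {lam : ∀ i, Fin (d i) → ℕ}

lemma filt_of_MF (h2 : ∀ i j, lam i j < L+1)
    (h3 : ∀ (l : Fin (L+1)) i, Fintype.card {j // (l : ℕ) ≤ lam i j} =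
        S l i + Fintype.card {j // (l : ℕ) + 1 ≤ lam i j})
    {x : RepSpace Q d K} (hx : MF Q d lam x) : x ∈ FiltSet Q d K L S := by
  obtain ⟨g, h, hgh, hm⟩ := hx
  refine ⟨fun l => stdF lam h l, stdF_zero h, stdF_bot (fun i => (hgh i).1) h2, fun l => ?_,
    fun l i => stdF_graded h _ i, fun l a => ?_, fun l i => ?_⟩
  · exact stdF_anti h (by simp)
  · exact stdF_arrow hgh hm _ a
  · rw [stdF_vdim hgh, stdF_vdim hgh]
    exact h3 l i

lemma flag_of_filt (h2 : ∀ i j, lam i j < L+1)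
    (h3 : ∀ (l : Fin (L+1)) i, Fintype.card {j // (l : ℕ) ≤ lam i j} =
        S l i + Fintype.card {j // (l : ℕ) + 1 ≤ lam i j})
    {x : RepSpace Q d K} (hx : x ∈ FiltSet Q d K L S) :
    ∃ g h : ∀ i, Matrix (Fin (d i)) (Fin (d i)) K, (∀ i, g i * h i = 1 ∧ h i * g i = 1) ∧
      ∀ a j k, lam _ j ≤ lam _ k → (h (Q.tgt a) * matOf Q d x a * g (Q.src a)) j k = 0 := by
  obtain ⟨F, hF0, hFL, hFa, hFg, hFx, hFd⟩ := hx
  let G : ℕ → Submodule K (Carrier Q d K) := fun l => if h : l < L+2 then F ⟨l, h⟩ else ⊥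
  have hG : ∀ l (h : l < L+2), G l = F ⟨l, h⟩ := fun l h => dif_pos h
  have hGb : ∀ l, L+1 ≤ l → G l = ⊥ := by
    intro l hl
    rcases Nat.lt_or_ge l (L+2) with h | h
    · rw [hG l h, ← hFL]; congr 1; ext; simp; omega
    · exact dif_neg (not_lt.2 h)
  have hGa : Antitone G := by
    apply antitone_nat_of_succ_le
    intro l
    rcases Nat.lt_or_ge l (L+1) with h | h
    · rw [hG l (by omega), hG (l+1) (by omega)]
      exact hFa ⟨l, h⟩
    · rw [hGb (l+1) (by omega)]; exact bot_le
  have hGd : ∀ l i, vdim Q d K (G l) i = Fintype.card {j // l ≤ lam i j} := by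
    intro l i
    rcases Nat.lt_or_ge l (L+1) with h | h
    · refine count_unique (f := fun l => vdim Q d K (G l) i)
        (T := fun l => Fintype.card {j // l ≤ lam i j}) (fun l => S l i) ?_ ?_ ?_ l h.le
      · rw [hGb _ le_rfl, vdim_bot, card_zero (h2 i) le_rfl]
      · intro l
        rw [hG l (by omega), hG (l+1) (by omega)]
        exact hFd l i
      · intro l; exact h3 l i
    · rw [hGb l h, vdim_bot, card_zero (h2 i) h]
  obtain ⟨g, h, hgh, hst⟩ := flag_std hGa (fun l i => by
    rcases Nat.lt_or_ge l (L+2) with h | h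
    · rw [hG l h]; exact hFg _ i
    · rw [hGb l (by omega), Submodule.map_bot]) h2 hGd
  refine ⟨g, h, hgh, matrix_of_stdF hgh h2 fun l hl a => ?_⟩
  rw [← hst, ← hst, hG l (by omega), hG (l+1) (by omega)]
  exact hFx ⟨l, hl⟩ a

lemma radPow_zero (x : RepSpace Q d K) : radPow Q d K x 0 = ⊤ := by
  rw [eq_top_iff]
  refine le_trans ?_ (le_iSup _ ⟨[], rfl⟩)
  simp [wordMap, Module.End.one_eq_id]

lemma radPow_succ (x : RepSpace Q d K) (l : ℕ) :
    radPow Q d K x (l+1) = ⨆ a, (radPow Q d K x l).map (arrowMap Q d K x a) := by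
  have hw : ∀ a w, LinearMap.range (wordMap Q d K x (a :: w)) =
      (LinearMap.range (wordMap Q d K x w)).map (arrowMap Q d K x a) := by
    intro a w
    rw [← LinearMap.range_comp]
    simp only [wordMap, List.map_cons, List.prod_cons]
    rfl
  apply le_antisymm
  · apply iSup_le
    rintro ⟨_ | ⟨a, w⟩, h⟩
    · simp at h
    · rw [hw]
      refine le_trans (Submodule.map_mono ?_)
        (le_iSup (fun a => (radPow Q d K x l).map (arrowMap Q d K x a)) a)
      exact le_iSup (fun w : {w : List (Fin Q.numArrows) // w.length = l} =>
        LinearMap.range (wordMap Q d K x w.1)) ⟨w, by simpa using h⟩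
  · apply iSup_le
    intro a
    rw [radPow, Submodule.map_iSup]
    apply iSup_le
    rintro ⟨w, h⟩
    rw [← hw]
    exact le_iSup (fun w : {w : List (Fin Q.numArrows) // w.length = l+1} =>
        LinearMap.range (wordMap Q d K x w.1)) ⟨a :: w, by simpa using h⟩

lemma radPow_anti (x : RepSpace Q d K) : Antitone (radPow Q d K x) := by
  apply antitone_nat_of_succ_le
  intro l
  induction l with
  | zero => rw [radPow_zero]; exact le_top
  | succ l ih =>
    rw [radPow_succ, radPow_succ]
    exact iSup_mono fun a => Submodule.map_mono (by rw [← radPow_succ]; exact ih)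

lemma radPow_graded (x : RepSpace Q d K) (l : ℕ) (i : Fin Q.n) :
    (radPow Q d K x l).map (proj Q d K i) ≤ radPow Q d K x l := by
  cases l with
  | zero => rw [radPow_zero]; exact le_top
  | succ l =>
    rw [radPow_succ, Submodule.map_iSup]
    refine iSup_mono fun a => ?_
    rintro _ ⟨_, ⟨m, hm, rfl⟩, rfl⟩
    by_cases hi : i = Q.tgt a
    · refine ⟨m, hm, ?_⟩
      apply carrier_ext
      intro i'
      by_cases hi' : i' = i
      · subst hi'; rw [comp_proj]
      · rw [comp_proj_ne hi', comp_arrow_ne]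
        rintro rfl; exact hi' hi.symm
    · have : proj Q d K i (arrowMap Q d K x a m) = 0 := by
        apply carrier_ext
        intro i'
        by_cases hi' : i' = i
        · subst hi'; rw [comp_proj, comp_arrow_ne _ _ hi, map_zero]
        · rw [comp_proj_ne hi', map_zero]
      rw [this]; exact zero_mem _

lemma trunc_iff (x : RepSpace Q d K) : x ∈ TruncRepVar Q d K L ↔ radPow Q d K x (L+1) = ⊥ := by
  rw [radPow, iSup_eq_bot]
  constructor
  · rintro h ⟨w, hw⟩
    simp only [h w hw, LinearMap.range_zero]
  · intro h w hw
    exact LinearMap.range_eq_bot.1 (h ⟨w, hw⟩)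

lemma rad_flag (h2 : ∀ i j, lam i j < L+1)
    (h3 : ∀ (l : Fin (L+1)) i, Fintype.card {j // (l : ℕ) ≤ lam i j} =
        S l i + Fintype.card {j // (l : ℕ) + 1 ≤ lam i j})
    {x : RepSpace Q d K} (hx : x ∈ TruncRepVar Q d K L) (hr : radLayering Q d K L x = S) :
    ∃ g h : ∀ i, Matrix (Fin (d i)) (Fin (d i)) K, (∀ i, g i * h i = 1 ∧ h i * g i = 1) ∧
      ∀ l, radPow Q d K x l = stdF lam h l := by
  rw [trunc_iff] at hx
  refine flag_std (radPow_anti x) (radPow_graded x) h2 fun l i => ?_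
  have hb : ∀ l, L+1 ≤ l → radPow Q d K x l = ⊥ := fun l hl =>
    le_bot_iff.1 (hx ▸ radPow_anti x hl)
  rcases Nat.lt_or_ge l (L+1) with h | h
  · refine count_unique (f := fun l => vdim Q d K (radPow Q d K x l) i)
      (T := fun l => Fintype.card {j // l ≤ lam i j}) (fun l => S l i) ?_ ?_ ?_ l h.le
    · rw [hx, vdim_bot, card_zero (h2 i) le_rfl]
    · intro l
      have := congrFun (congrFun hr l) i
      have hm := vdim_mono (radPow_anti x (Nat.le_succ l)) i
      simp only [radLayering] at this
      simp only [Nat.succ_eq_add_one] at hm ⊢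
      omega
    · intro l; exact h3 l i
  · rw [hb l h, vdim_bot, card_zero (h2 i) h]

lemma MF_of_rad (h2 : ∀ i j, lam i j < L+1)
    (h3 : ∀ (l : Fin (L+1)) i, Fintype.card {j // (l : ℕ) ≤ lam i j} =
        S l i + Fintype.card {j // (l : ℕ) + 1 ≤ lam i j})
    {x : RepSpace Q d K} (hx : x ∈ TruncRepVar Q d K L) (hr : radLayering Q d K L x = S) :
    MF Q d lam x := by
  obtain ⟨g, h, hgh, hst⟩ := rad_flag h2 h3 hx hr
  refine ⟨g, h, hgh, matrix_of_stdF hgh h2 fun l hl a => ?_⟩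
  rw [← hst, ← hst, radPow_succ]
  exact le_iSup (fun a => (radPow Q d K x l).map (arrowMap Q d K x a)) a

lemma rad_of_std (h2 : ∀ i j, lam i j < L+1)
    (h3 : ∀ (l : Fin (L+1)) i, Fintype.card {j // (l : ℕ) ≤ lam i j} =
        S l i + Fintype.card {j // (l : ℕ) + 1 ≤ lam i j})
    {g h : ∀ i, Matrix (Fin (d i)) (Fin (d i)) K}
    (hgh : ∀ i, g i * h i = 1 ∧ h i * g i = 1) {x : RepSpace Q d K}
    (hst : ∀ l ≤ L+1, radPow Q d K x l = stdF lam h l) :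
    x ∈ TruncRepVar Q d K L ∧ radLayering Q d K L x = S := by
  constructor
  · rw [trunc_iff, hst _ le_rfl, stdF_bot (fun i => (hgh i).1) h2]
  · funext l i
    rw [radLayering, hst _ (by omega), hst _ (by omega), stdF_vdim hgh, stdF_vdim hgh, h3 l i]
    omega

lemma pencil_sub {ι V : Type} [Fintype ι] [AddCommGroup V] [Module K V] [FiniteDimensional K V]
    (f g : ι → V →ₗ[K] V) (N N' : Submodule K V) (hf : ∀ a, N.map (f a) ≤ N')
    (hg : ⨆ a, N.map (g a) = N') :
    ∃ q : Polynomial K, q.eval 1 ≠ 0 ∧ ∀ t, q.eval t ≠ 0 →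
      ⨆ a, N.map (f a + t • (g a - f a)) = N' := by
  classical
  have hg' : ∀ a, N.map (g a) ≤ N' := fun a => hg ▸ le_iSup (fun a => N.map (g a)) a
  have hf1 : ∀ a, ∀ m ∈ N, f a m ∈ N' := fun a m hm => hf a ⟨m, hm, rfl⟩
  have hg1 : ∀ a, ∀ m ∈ N, g a m ∈ N' := fun a m hm => hg' a ⟨m, hm, rfl⟩
  let A : (ι → N) →ₗ[K] N' := ∑ a, ((f a).restrict (hf1 a)) ∘ₗ LinearMap.proj a
  let B : (ι → N) →ₗ[K] N' := ∑ a, ((g a).restrict (hg1 a)) ∘ₗ LinearMap.proj a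
  have hA : ∀ u, (A u : V) = ∑ a, f a (u a) := by
    intro u
    simp [A, LinearMap.sum_apply]
  have hB : ∀ u, (B u : V) = ∑ a, g a (u a) := by
    intro u
    simp [B, LinearMap.sum_apply]
  have hs : Function.Surjective (A + (B - A)) := by
    rw [add_sub_cancel, ← LinearMap.range_eq_top, eq_top_iff]
    rintro ⟨w, hw⟩ _
    have : N' ≤ (LinearMap.range B).map N'.subtype := by
      conv_lhs => rw [← hg]
      refine iSup_le fun a => ?_
      rintro _ ⟨m, hm, rfl⟩
      refine ⟨B (Pi.single a ⟨m, hm⟩), ⟨_, rfl⟩, ?_⟩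
      rw [Submodule.subtype_apply, hB, Finset.sum_eq_single a]
      · simp
      · intro b _ hb; simp [hb]
      · simp
    obtain ⟨v, hv, hvw⟩ := this hw
    have : v = ⟨w, hw⟩ := Subtype.ext hvw
    rwa [← this]
  obtain ⟨q, hq1, hq⟩ := pencil_surj A (B - A) hs
  refine ⟨q, hq1, fun t ht => le_antisymm (iSup_le fun a => ?_) fun w hw => ?_⟩
  · rintro _ ⟨m, hm, rfl⟩
    simp only [LinearMap.add_apply, LinearMap.smul_apply, LinearMap.sub_apply]
    exact add_mem (hf1 a m hm) (N'.smul_mem _ (sub_mem (hg1 a m hm) (hf1 a m hm)))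
  · obtain ⟨u, hu⟩ := hq t ht ⟨w, hw⟩
    have h1 : w = ∑ a, (f a + t • (g a - f a)) (u a : V) := by
      have := congrArg (Subtype.val) hu
      simp only [LinearMap.add_apply, LinearMap.smul_apply, LinearMap.sub_apply,
        Submodule.coe_add, Submodule.coe_smul, Submodule.coe_sub, hA, hB] at this
      rw [← this]
      simp only [LinearMap.add_apply, LinearMap.smul_apply, LinearMap.sub_apply,
        Finset.sum_add_distrib, ← Finset.smul_sum, Finset.sum_sub_distrib]
    rw [h1]
    refine Submodule.sum_mem _ fun a _ => ?_
    exact Submodule.mem_iSup_of_mem a ⟨_, (u a).2, rfl⟩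

lemma arrowMap_pencil (x z : RepSpace Q d K) (t : K) (a : Fin Q.numArrows) :
    arrowMap Q d K (x + t • (z - x)) a =
      arrowMap Q d K x a + t • (arrowMap Q d K z a - arrowMap Q d K x a) := by
  apply LinearMap.ext
  intro m
  funext jv
  by_cases h : jv.1 = Q.tgt a
  · simp only [arrowMap, LinearMap.coe_mk, AddHom.coe_mk, LinearMap.add_apply,
      LinearMap.smul_apply, LinearMap.sub_apply, Pi.add_apply, Pi.smul_apply, Pi.sub_apply,
      dif_pos h, smul_eq_mul, add_mul, mul_assoc, sub_mul, Finset.sum_add_distrib,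
      Finset.mul_sum, ← Finset.sum_sub_distrib]
  · simp [arrowMap, h]

/-- The graded endomorphism given by a family of matrices. -/
def twist (c : ∀ i, Matrix (Fin (d i)) (Fin (d i)) K) : Carrier Q d K →ₗ[K] Carrier Q d K where
  toFun m := fun jv => (c jv.1).mulVec (comp jv.1 m) jv.2
  map_add' u v := by
    funext jv; rw [map_add, Matrix.mulVec_add]; rfl
  map_smul' r u := by
    funext jv; rw [map_smul, Matrix.mulVec_smul]; rfl

lemma comp_twist (c : ∀ i, Matrix (Fin (d i)) (Fin (d i)) K) (i : Fin Q.n) (m : Carrier Q d K) :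
    comp i (twist c m) = (c i).mulVec (comp i m) := rfl

lemma twist_exists {g h g' h' : ∀ i, Matrix (Fin (d i)) (Fin (d i)) K}
    (hgh : ∀ i, g i * h i = 1 ∧ h i * g i = 1) (hgh' : ∀ i, g' i * h' i = 1 ∧ h' i * g' i = 1)
    (y : RepSpace Q d K) (hy : ∀ l, ⨆ a, (stdF lam h' l).map (arrowMap Q d K y a) =
      stdF lam h' (l+1)) :
    ∃ z : RepSpace Q d K, ∀ l, ⨆ a, (stdF lam h l).map (arrowMap Q d K z a) =
      stdF lam h (l+1) := by
  let φ : Carrier Q d K →ₗ[K] Carrier Q d K := twist (fun i => g i * h' i)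
  let ψ : Carrier Q d K →ₗ[K] Carrier Q d K := twist (fun i => g' i * h i)
  have hφψ : ∀ m, φ (ψ m) = m := by
    intro m
    apply carrier_ext
    intro i
    rw [comp_twist, comp_twist, Matrix.mulVec_mulVec, Matrix.mul_assoc, ← Matrix.mul_assoc (h' i),
      (hgh' i).2, Matrix.one_mul, (hgh i).1, Matrix.one_mulVec]
  have hmap : ∀ l, (stdF lam h' l).map φ = stdF lam h l := by
    intro l
    apply le_antisymm
    · rintro _ ⟨m, hm, rfl⟩ i j hj
      rw [comp_twist, Matrix.mulVec_mulVec, ← Matrix.mul_assoc, (hgh i).2, Matrix.one_mul]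
      exact hm i j hj
    · intro m hm
      refine ⟨ψ m, ?_, hφψ m⟩
      intro i j hj
      rw [comp_twist, Matrix.mulVec_mulVec, ← Matrix.mul_assoc, (hgh' i).2, Matrix.one_mul]
      exact hm i j hj
  let z : RepSpace Q d K := fun c =>
    (g (Q.tgt c.1) * h' (Q.tgt c.1) * matOf Q d y c.1 * (g' (Q.src c.1) * h (Q.src c.1)))
      c.2.1 c.2.2
  have hz : ∀ a, matOf Q d z a =
      g (Q.tgt a) * h' (Q.tgt a) * matOf Q d y a * (g' (Q.src a) * h (Q.src a)) := fun a => rfl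
  have hcomm : ∀ a, arrowMap Q d K z a ∘ₗ φ = φ ∘ₗ arrowMap Q d K y a := by
    intro a
    apply LinearMap.ext
    intro m
    apply carrier_ext
    intro i
    simp only [LinearMap.comp_apply]
    by_cases hi : i = Q.tgt a
    · subst hi
      rw [comp_arrow, hz, comp_twist, comp_twist, comp_arrow, Matrix.mulVec_mulVec,
        Matrix.mulVec_mulVec]
      congr 1
      rw [Matrix.mul_assoc _ (g' _ * h _), Matrix.mul_assoc (g' _), ← Matrix.mul_assoc (h _),
        (hgh _).2, Matrix.one_mul, (hgh' _).1, Matrix.mul_one]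
    · rw [comp_arrow_ne _ _ hi, comp_twist, comp_arrow_ne _ _ hi, Matrix.mulVec_zero]
  refine ⟨z, fun l => ?_⟩
  rw [← hmap, ← hmap, ← hy, Submodule.map_iSup]
  congr 1
  funext a
  rw [← Submodule.map_comp, ← Submodule.map_comp, hcomm]

lemma dense_aux [Infinite K] (h2 : ∀ i j, lam i j < L+1)
    (h3 : ∀ (l : Fin (L+1)) i, Fintype.card {j // (l : ℕ) ≤ lam i j} =
        S l i + Fintype.card {j // (l : ℕ) + 1 ≤ lam i j})
    (hreal : ∃ x ∈ TruncRepVar Q d K L, radLayering Q d K L x = S)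
    {x : RepSpace Q d K} (hx : x ∈ FiltSet Q d K L S) (p : MvPolynomial (Coords Q d) K)
    (hp : MvPolynomial.eval x p ≠ 0) :
    ∃ y, (y ∈ TruncRepVar Q d K L ∧ radLayering Q d K L y = S) ∧ MvPolynomial.eval y p ≠ 0 := by
  obtain ⟨g, h, hgh, hm⟩ := flag_of_filt h2 h3 hx
  obtain ⟨y, hy1, hy2⟩ := hreal
  obtain ⟨g', h', hgh', hst⟩ := rad_flag h2 h3 hy1 hy2
  obtain ⟨z, hz⟩ := twist_exists (lam := lam) hgh hgh' y (fun l => by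
    rw [← hst, ← hst, radPow_succ])
  choose q hq1 hq using fun l => pencil_sub (arrowMap Q d K x) (arrowMap Q d K z)
    (stdF lam h l) (stdF lam h (l+1)) (stdF_arrow hgh hm l) (hz l)
  let P : Polynomial K := MvPolynomial.aeval
    (fun c => Polynomial.C (x c) + Polynomial.X * Polynomial.C (z c - x c)) p
  have hP : ∀ t, P.eval t = MvPolynomial.eval (x + t • (z - x)) p := by
    intro t
    have : (Polynomial.evalRingHom t).comp ((MvPolynomial.aeval
      (fun c => Polynomial.C (x c) + Polynomial.X * Polynomial.C (z c - x c)) :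
        MvPolynomial (Coords Q d) K →ₐ[K] Polynomial K) : MvPolynomial (Coords Q d) K →+* _) =
        MvPolynomial.eval (x + t • (z - x)) := by
      apply MvPolynomial.ringHom_ext
      · intro r; simp
      · intro c; simp
    exact congrArg (fun f => f p) this
  have hP0 : P ≠ 0 := by
    intro h0
    have := hP 0
    rw [h0, Polynomial.eval_zero, zero_smul, add_zero] at this
    exact hp this.symm
  have hne : P * ∏ l ∈ Finset.range (L+1), q l ≠ 0 := by
    refine mul_ne_zero hP0 (Finset.prod_ne_zero_iff.2 fun l _ h0 => hq1 l ?_)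
    rw [h0, Polynomial.eval_zero]
  obtain ⟨t, ht⟩ : ∃ t, (P * ∏ l ∈ Finset.range (L+1), q l).eval t ≠ 0 := by
    by_contra! hall
    exact hne (Polynomial.funext fun t => by rw [hall, Polynomial.eval_zero])
  rw [Polynomial.eval_mul, Polynomial.eval_prod] at ht
  have ht1 := left_ne_zero_of_mul ht
  have ht2 := Finset.prod_ne_zero_iff.1 (right_ne_zero_of_mul ht)
  refine ⟨x + t • (z - x), rad_of_std h2 h3 hgh ?_, by rw [← hP]; exact ht1⟩
  intro l
  induction l with
  | zero => intro _; rw [radPow_zero, stdF_zero]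
  | succ l ih =>
    intro hl
    rw [radPow_succ, ih (by omega), ← hq l t (ht2 l (Finset.mem_range.2 (by omega)))]
    congr 1
    funext a
    rw [arrowMap_pencil]

lemma zariski_closure {ι k : Type} [Field k] (s : Set (ι → k)) (x : ι → k) :
    x ∈ @closure _ (zariskiTopology ι k) s ↔
      ∀ p : MvPolynomial ι k, MvPolynomial.eval x p ≠ 0 → ∃ y ∈ s, MvPolynomial.eval y p ≠ 0 := by
  let _ := zariskiTopology ι k
  have hB : TopologicalSpace.IsTopologicalBasis
      {U : Set (ι → k) | ∃ p : MvPolynomial ι k, U = {x | MvPolynomial.eval x p ≠ 0}} := by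
    refine ⟨?_, ?_, rfl⟩
    · rintro _ ⟨p, rfl⟩ _ ⟨q, rfl⟩ x hx
      refine ⟨_, ⟨p * q, rfl⟩, ?_, ?_⟩
      · simpa using hx
      · intro y hy
        simpa using hy
    · rw [Set.eq_univ_iff_forall]
      intro x
      exact ⟨_, ⟨1, rfl⟩, by simp⟩
  rw [hB.mem_closure_iff]
  constructor
  · intro h p hp
    obtain ⟨y, hy1, hy2⟩ := h _ ⟨p, rfl⟩ hp
    exact ⟨y, hy2, hy1⟩
  · rintro h _ ⟨p, rfl⟩ hp
    obtain ⟨y, hy1, hy2⟩ := h p hp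
    exact ⟨y, hy2, hy1⟩

end final

end QuiverData

open QuiverData in
/-- For a truncated path algebra `Λ` and a realizable semisimple
sequence `S` of dimension vector `d`, the Zariski closure of `Rep S` in `Rep_d(Λ)`
equals `Filt S`, the set of points whose module has a submodule filtration governed
by `S`. -/
theorem statement_16 (K : Type) [Field K] [IsAlgClosed K]
    (Q : QuiverData) (L : ℕ) (hL : 0 < L)
    (d : Fin Q.n → ℕ) (S : Fin (L+1) → Fin Q.n → ℕ) (hS : hasDimVec S d)
    (hreal : ∃ x ∈ TruncRepVar Q d K L, radLayering Q d K L x = S) :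
    closure {x : TruncV Q d K L | radLayering Q d K L x.1 = S}
      = {x : TruncV Q d K L | x.1 ∈ FiltSet Q d K L S} := by
  obtain ⟨lam, h1, h2, h3⟩ := exists_lam hS
  have : Infinite K := IsAlgClosed.instInfinite
  ext x
  rw [closure_subtype]
  rw [zariski_closure]
  constructor
  · intro h
    refine filt_of_MF h2 h3 (MF_closed h1 x.1 fun p hp => ?_)
    obtain ⟨_, ⟨y, hy, rfl⟩, hyp⟩ := h p hp
    exact ⟨y.1, MF_of_rad h2 h3 y.2 hy, hyp⟩
  · intro hx p hp
    obtain ⟨y, ⟨hy1, hy2⟩, hyp⟩ := dense_aux h2 h3 hreal hx p hp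
    exact ⟨y, ⟨⟨y, hy1⟩, hy2, rfl⟩, hyp⟩
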